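/- arXiv:1306.2696 — 3 statements merged into one kernel-verified Lean document; each statement's English description precedes it below -/
import Mathlib

section
/- Over finitely-branching NPLTS models, probabilistic ready-trace-distribution equivalence coincides with probabilistic failure-trace-distribution equivalence: for every finitely-branching NPLTS (S, A, →) and all s1, s2 ∈ S, s1 ≈_{PRTr,dis} s2 if and only if s1 ≈_{PFTr,dis} s2. -/
open scoped ENNReal
open Classical

noncomputable section

/-- Infimum of a set of values in `ℝ≥0∞`, taken to be `0` when the set is empty
(matching the paper's convention for `⊓` over an empty set). -/
def inf0 (X : Set ℝ≥0∞) : ℝ≥0∞ := if X = ∅ then 0 else sInf X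

/-- Probability mass that a discrete distribution assigns to a set of states. -/
def pmfMass {S : Type} (D : PMF S) (G : Set S) : ℝ≥0∞ := ∑' x : G, D x

/-- A nondeterministic and probabilistic labeled transition system (NPLTS):
a transition relation `→ ⊆ S × A × Distr(S)`, with `Distr(S)` the discrete
probability distributions over `S` (formalized as `PMF S`). -/
structure NPLTS (S A : Type) where
  trans : S → A → PMF S → Prop

namespace NPLTS

variable {S A : Type}

/-- The set of actions enabled at a state. -/
def enabled (L : NPLTS S A) (s : S) : Set A := {a | ∃ D, L.trans s a D}

/-- `s` has at least one outgoing transition. -/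
def hasTrans (L : NPLTS S A) (s : S) : Prop := ∃ a D, L.trans s a D

/-- A finite computation from `s`, recorded as the list of its steps
(action, target state): each step must come from some transition whose
distribution gives the target state positive probability. -/
def IsComp (L : NPLTS S A) : S → List (A × S) → Prop
  | _, [] => True
  | s, (a, s') :: c => (∃ D, L.trans s a D ∧ s' ∈ D.support) ∧ L.IsComp s' c

/-- The probability of a computation: the product of the step probabilities.
(In a fully probabilistic NPLTS, such as a resolution, the chosen transition
at each state is unique, so the supremum below selects its probability.) -/
def compProb (L : NPLTS S A) : S → List (A × S) → ℝ≥0∞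
  | _, [] => 1
  | s, (a, s') :: c => (⨆ (D : PMF S) (_ : L.trans s a D), D s') * L.compProb s' c

/-- The probability of a set of computations from `s`. -/
def probSet (L : NPLTS S A) (s : S) (C : Set (List (A × S))) : ℝ≥0∞ :=
  ∑' c : C, L.compProb s (c : List (A × S))

/-- Each state has finitely many outgoing transitions. -/
def FinitelyBranching (L : NPLTS S A) : Prop :=
  ∀ s : S, {p : A × PMF S | L.trans s p.1 p.2}.Finite

/-- Every transition concentrates all the probability mass in a single state. -/
def FullyNondeterministic (L : NPLTS S A) : Prop :=
  ∀ s a D, L.trans s a D → ∃ s', D = PMF.pure s'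

/-- Every state has at most one outgoing transition. -/
def FullyProbabilistic (L : NPLTS S A) : Prop :=
  ∀ (s : S) a₁ D₁ a₂ D₂, L.trans s a₁ D₁ → L.trans s a₂ D₂ → a₁ = a₂ ∧ D₁ = D₂

/-- Fully synchronous parallel composition of two NPLTSs over the same actions. -/
def par {S₁ S₂ : Type} (L₁ : NPLTS S₁ A) (L₂ : NPLTS S₂ A) : NPLTS (S₁ × S₂) A where
  trans p a D := ∃ D₁ D₂, L₁.trans p.1 a D₁ ∧ L₂.trans p.2 a D₂ ∧
    ∀ q : S₁ × S₂, D q = D₁ q.1 * D₂ q.2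

end NPLTS

/-- The final state of a computation starting at `s`. -/
def lastState {S A : Type} : S → List (A × S) → S
  | s, [] => s
  | _, (_, s') :: c => lastState s' c

/-- The trace (sequence of actions) of a computation. -/
def traceOf {S A : Type} (c : List (A × S)) : List A := c.map Prod.fst

/-- Stepwise compatibility of a computation with a decorated trace: the actions
match and after each step the (corresponding) reached state satisfies `P`
with respect to the decoration. -/
def decoComp {S A Z : Type} (P : S → Set A → Prop) (corr : Z → S) :
    List (A × Z) → List (A × Set A) → Prop
  | [], [] => True
  | (a, z) :: c, (b, X) :: φ => a = b ∧ P (corr z) X ∧ decoComp P corr c φ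
  | _, _ => False

/-- A resolution of `s` obtained via a deterministic scheduler: a fully
probabilistic NPLTS together with a correspondence function to the states of
the original NPLTS. -/
structure Resolution {S A : Type} (L : NPLTS S A) (s : S) where
  State : Type
  countable : Countable State
  lts : NPLTS State A
  corr : State → S
  init : State
  corr_init : corr init = s
  mimic : ∀ z a D, lts.trans z a D →
    ∃ D', L.trans (corr z) a D' ∧ ∀ z', D z' = D' (corr z')
  det : ∀ z a₁ a₂ D₁ D₂, lts.trans z a₁ D₁ → lts.trans z a₂ D₂ → a₁ = a₂ ∧ D₁ = D₂

namespace Resolution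

variable {S A : Type} {L : NPLTS S A} {s : S}

/-- Probability of a set of computations of the resolution from its initial state. -/
def prob (R : Resolution L s) (C : Set (List (A × R.State))) : ℝ≥0∞ :=
  R.lts.probSet R.init C

/-- `CC(z_s, α)`: the α-compatible computations from the initial state. -/
def cc (R : Resolution L s) (α : List A) : Set (List (A × R.State)) :=
  {c | R.lts.IsComp R.init c ∧ traceOf c = α}

/-- `CCC(z_s, α)`: the completed α-compatible computations (the corresponding
final state has no outgoing transitions in the original NPLTS). -/
def ccc (R : Resolution L s) (α : List A) : Set (List (A × R.State)) :=
  {c | c ∈ R.cc α ∧ ¬ L.hasTrans (R.corr (lastState R.init c))}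

/-- `FCC(z_s, (α, F))`: α-compatible computations whose corresponding final
state enables no action of the failure set `F`. -/
def fcc (R : Resolution L s) (α : List A) (F : Set A) : Set (List (A × R.State)) :=
  {c | c ∈ R.cc α ∧ ∀ f ∈ F, f ∉ L.enabled (R.corr (lastState R.init c))}

/-- `RCC(z_s, (α, Rd))`: α-compatible computations whose corresponding final
state enables exactly the ready set `Rd`. -/
def rcc (R : Resolution L s) (α : List A) (Rd : Set A) : Set (List (A × R.State)) :=
  {c | c ∈ R.cc α ∧ L.enabled (R.corr (lastState R.init c)) = Rd}

/-- `FTCC(z_s, φ)`: computations compatible with the failure trace `φ`. -/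
def ftcc (R : Resolution L s) (φ : List (A × Set A)) : Set (List (A × R.State)) :=
  {c | R.lts.IsComp R.init c ∧
    decoComp (fun t F => ∀ f ∈ F, f ∉ L.enabled t) R.corr c φ}

/-- `RTCC(z_s, ρ)`: computations compatible with the ready trace `ρ`. -/
def rtcc (R : Resolution L s) (ρ : List (A × Set A)) : Set (List (A × R.State)) :=
  {c | R.lts.IsComp R.init c ∧ decoComp (fun t X => L.enabled t = X) R.corr c ρ}

/-- `R ∈ Res_α(s)`: the resolution has no (maximal) computation corresponding
to a proper prefix of an α-compatible computation of the original NPLTS. -/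
def InResAlpha (R : Resolution L s) (α : List A) : Prop :=
  ¬ ∃ c : List (A × R.State), R.lts.IsComp R.init c ∧
      ¬ R.lts.hasTrans (lastState R.init c) ∧
      ∃ c' : List (A × S), L.IsComp s c' ∧ traceOf c' = α ∧
        (c.map fun p => (p.1, R.corr p.2)) <+: c' ∧ c.length < c'.length

/-- A state of the resolution reachable from its initial state. -/
def reachable (R : Resolution L s) (z : R.State) : Prop :=
  ∃ c, R.lts.IsComp R.init c ∧ lastState R.init c = z

/-- A maximal resolution: it cannot be further extended, i.e. every reachable
state whose corresponding state has an outgoing transition has one too. -/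
def Maximal (R : Resolution L s) : Prop :=
  ∀ z, R.reachable z → L.hasTrans (R.corr z) → R.lts.hasTrans z

/-- `SC(z_{s,o})`: successful computations of a resolution of a configuration
of an interaction system (the test component of the final configuration is
the success state `ω`). -/
def sc {S O : Type} {I : NPLTS (S × O) A} {cfg : S × O}
    (R : Resolution I cfg) (ω : O) : Set (List (A × R.State)) :=
  {c | R.lts.IsComp R.init c ∧ (R.corr (lastState R.init c)).2 = ω}

/-- `SCC(z_{s,o}, α)`: successful α-compatible computations. -/
def scc {S O : Type} {I : NPLTS (S × O) A} {cfg : S × O}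
    (R : Resolution I cfg) (ω : O) (α : List A) : Set (List (A × R.State)) :=
  {c | (R.lts.IsComp R.init c ∧ (R.corr (lastState R.init c)).2 = ω) ∧ traceOf c = α}

end Resolution

section Equivalences

variable {S A : Type} (L : NPLTS S A)

/-! ### Trace-based equivalences -/

/-- Probabilistic trace-distribution equivalence `≈_{PTr,dis}`. -/
def PTrDis (s₁ s₂ : S) : Prop :=
  (∀ R₁ : Resolution L s₁, ∃ R₂ : Resolution L s₂,
    ∀ α : List A, R₁.prob (R₁.cc α) = R₂.prob (R₂.cc α)) ∧
  (∀ R₂ : Resolution L s₂, ∃ R₁ : Resolution L s₁,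
    ∀ α : List A, R₂.prob (R₂.cc α) = R₁.prob (R₁.cc α))

/-- Probabilistic trace equivalence `≈_{PTr}`. -/
def PTr (s₁ s₂ : S) : Prop :=
  ∀ α : List A,
    (∀ R₁ : Resolution L s₁, ∃ R₂ : Resolution L s₂,
      R₁.prob (R₁.cc α) = R₂.prob (R₂.cc α)) ∧
    (∀ R₂ : Resolution L s₂, ∃ R₁ : Resolution L s₁,
      R₂.prob (R₂.cc α) = R₁.prob (R₁.cc α))

/-- The set of values `prob(CC(z_s, α))` over the resolutions in `Res_α(s)`. -/
def ccVals (s : S) (α : List A) : Set ℝ≥0∞ :=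
  {p | ∃ R : Resolution L s, R.InResAlpha α ∧ p = R.prob (R.cc α)}

/-- Probabilistic ⊔⊓-trace equivalence `≈_{PTr,⊔⊓}`. -/
def PTrSupInf (s₁ s₂ : S) : Prop :=
  ∀ α : List A,
    sSup (ccVals L s₁ α) = sSup (ccVals L s₂ α) ∧
    inf0 (ccVals L s₁ α) = inf0 (ccVals L s₂ α)

/-- Probabilistic completed-trace-distribution equivalence `≈_{PCTr,dis}`. -/
def PCTrDis (s₁ s₂ : S) : Prop :=
  (∀ R₁ : Resolution L s₁, ∃ R₂ R₂' : Resolution L s₂, ∀ α : List A,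
    R₁.prob (R₁.cc α) = R₂.prob (R₂.cc α) ∧
    R₁.prob (R₁.ccc α) = R₂'.prob (R₂'.ccc α)) ∧
  (∀ R₂ : Resolution L s₂, ∃ R₁ R₁' : Resolution L s₁, ∀ α : List A,
    R₂.prob (R₂.cc α) = R₁.prob (R₁.cc α) ∧
    R₂.prob (R₂.ccc α) = R₁'.prob (R₁'.ccc α))

/-- Probabilistic completed-trace equivalence `≈_{PCTr}`. -/
def PCTr (s₁ s₂ : S) : Prop :=
  ∀ α : List A,
    (∀ R₁ : Resolution L s₁, ∃ R₂ R₂' : Resolution L s₂,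
      R₁.prob (R₁.cc α) = R₂.prob (R₂.cc α) ∧
      R₁.prob (R₁.ccc α) = R₂'.prob (R₂'.ccc α)) ∧
    (∀ R₂ : Resolution L s₂, ∃ R₁ R₁' : Resolution L s₁,
      R₂.prob (R₂.cc α) = R₁.prob (R₁.cc α) ∧
      R₂.prob (R₂.ccc α) = R₁'.prob (R₁'.ccc α))

/-- The set of values `prob(CCC(z_s, α))` over the resolutions in `Res_α(s)`. -/
def cccVals (s : S) (α : List A) : Set ℝ≥0∞ :=
  {p | ∃ R : Resolution L s, R.InResAlpha α ∧ p = R.prob (R.ccc α)}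

/-- Probabilistic ⊔⊓-completed-trace equivalence `≈_{PCTr,⊔⊓}`. -/
def PCTrSupInf (s₁ s₂ : S) : Prop :=
  ∀ α : List A,
    (sSup (ccVals L s₁ α) = sSup (ccVals L s₂ α) ∧
     inf0 (ccVals L s₁ α) = inf0 (ccVals L s₂ α)) ∧
    (sSup (cccVals L s₁ α) = sSup (cccVals L s₂ α) ∧
     inf0 (cccVals L s₁ α) = inf0 (cccVals L s₂ α))

/-- Probabilistic failure-distribution equivalence `≈_{PF,dis}`. -/
def PFDis (s₁ s₂ : S) : Prop :=
  (∀ R₁ : Resolution L s₁, ∃ R₂ : Resolution L s₂, ∀ (α : List A) (F : Set A),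
    R₁.prob (R₁.fcc α F) = R₂.prob (R₂.fcc α F)) ∧
  (∀ R₂ : Resolution L s₂, ∃ R₁ : Resolution L s₁, ∀ (α : List A) (F : Set A),
    R₂.prob (R₂.fcc α F) = R₁.prob (R₁.fcc α F))

/-- Probabilistic failure equivalence `≈_{PF}`. -/
def PF (s₁ s₂ : S) : Prop :=
  ∀ (α : List A) (F : Set A),
    (∀ R₁ : Resolution L s₁, ∃ R₂ : Resolution L s₂,
      R₁.prob (R₁.fcc α F) = R₂.prob (R₂.fcc α F)) ∧
    (∀ R₂ : Resolution L s₂, ∃ R₁ : Resolution L s₁,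
      R₂.prob (R₂.fcc α F) = R₁.prob (R₁.fcc α F))

/-- The set of values `prob(FCC(z_s, (α, F)))` over the resolutions in `Res_α(s)`. -/
def fccVals (s : S) (α : List A) (F : Set A) : Set ℝ≥0∞ :=
  {p | ∃ R : Resolution L s, R.InResAlpha α ∧ p = R.prob (R.fcc α F)}

/-- Probabilistic ⊔⊓-failure equivalence `≈_{PF,⊔⊓}`. -/
def PFSupInf (s₁ s₂ : S) : Prop :=
  ∀ (α : List A) (F : Set A),
    sSup (fccVals L s₁ α F) = sSup (fccVals L s₂ α F) ∧
    inf0 (fccVals L s₁ α F) = inf0 (fccVals L s₂ α F)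

/-- Probabilistic failure-trace-distribution equivalence `≈_{PFTr,dis}`. -/
def PFTrDis (s₁ s₂ : S) : Prop :=
  (∀ R₁ : Resolution L s₁, ∃ R₂ : Resolution L s₂, ∀ φ : List (A × Set A),
    R₁.prob (R₁.ftcc φ) = R₂.prob (R₂.ftcc φ)) ∧
  (∀ R₂ : Resolution L s₂, ∃ R₁ : Resolution L s₁, ∀ φ : List (A × Set A),
    R₂.prob (R₂.ftcc φ) = R₁.prob (R₁.ftcc φ))

/-- Probabilistic failure-trace equivalence `≈_{PFTr}`. -/
def PFTr (s₁ s₂ : S) : Prop :=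
  ∀ φ : List (A × Set A),
    (∀ R₁ : Resolution L s₁, ∃ R₂ : Resolution L s₂,
      R₁.prob (R₁.ftcc φ) = R₂.prob (R₂.ftcc φ)) ∧
    (∀ R₂ : Resolution L s₂, ∃ R₁ : Resolution L s₁,
      R₂.prob (R₂.ftcc φ) = R₁.prob (R₁.ftcc φ))

/-- The set of values `prob(FTCC(z_s, φ))` over the resolutions in
`Res_{a₁…aₙ}(s)`, where `a₁…aₙ` is the trace underlying `φ`. -/
def ftccVals (s : S) (φ : List (A × Set A)) : Set ℝ≥0∞ :=
  {p | ∃ R : Resolution L s, R.InResAlpha (φ.map Prod.fst) ∧ p = R.prob (R.ftcc φ)}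

/-- Probabilistic ⊔⊓-failure-trace equivalence `≈_{PFTr,⊔⊓}`. -/
def PFTrSupInf (s₁ s₂ : S) : Prop :=
  ∀ φ : List (A × Set A),
    sSup (ftccVals L s₁ φ) = sSup (ftccVals L s₂ φ) ∧
    inf0 (ftccVals L s₁ φ) = inf0 (ftccVals L s₂ φ)

/-- Probabilistic readiness-distribution equivalence `≈_{PR,dis}`. -/
def PRDis (s₁ s₂ : S) : Prop :=
  (∀ R₁ : Resolution L s₁, ∃ R₂ : Resolution L s₂, ∀ (α : List A) (Rd : Set A),
    R₁.prob (R₁.rcc α Rd) = R₂.prob (R₂.rcc α Rd)) ∧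
  (∀ R₂ : Resolution L s₂, ∃ R₁ : Resolution L s₁, ∀ (α : List A) (Rd : Set A),
    R₂.prob (R₂.rcc α Rd) = R₁.prob (R₁.rcc α Rd))

/-- Probabilistic readiness equivalence `≈_{PR}`. -/
def PR (s₁ s₂ : S) : Prop :=
  ∀ (α : List A) (Rd : Set A),
    (∀ R₁ : Resolution L s₁, ∃ R₂ : Resolution L s₂,
      R₁.prob (R₁.rcc α Rd) = R₂.prob (R₂.rcc α Rd)) ∧
    (∀ R₂ : Resolution L s₂, ∃ R₁ : Resolution L s₁,
      R₂.prob (R₂.rcc α Rd) = R₁.prob (R₁.rcc α Rd))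

/-- The set of values `prob(RCC(z_s, (α, Rd)))` over the resolutions in `Res_α(s)`. -/
def rccVals (s : S) (α : List A) (Rd : Set A) : Set ℝ≥0∞ :=
  {p | ∃ R : Resolution L s, R.InResAlpha α ∧ p = R.prob (R.rcc α Rd)}

/-- Probabilistic ⊔⊓-readiness equivalence `≈_{PR,⊔⊓}`. -/
def PRSupInf (s₁ s₂ : S) : Prop :=
  ∀ (α : List A) (Rd : Set A),
    sSup (rccVals L s₁ α Rd) = sSup (rccVals L s₂ α Rd) ∧
    inf0 (rccVals L s₁ α Rd) = inf0 (rccVals L s₂ α Rd)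

/-- Probabilistic ready-trace-distribution equivalence `≈_{PRTr,dis}`. -/
def PRTrDis (s₁ s₂ : S) : Prop :=
  (∀ R₁ : Resolution L s₁, ∃ R₂ : Resolution L s₂, ∀ ρ : List (A × Set A),
    R₁.prob (R₁.rtcc ρ) = R₂.prob (R₂.rtcc ρ)) ∧
  (∀ R₂ : Resolution L s₂, ∃ R₁ : Resolution L s₁, ∀ ρ : List (A × Set A),
    R₂.prob (R₂.rtcc ρ) = R₁.prob (R₁.rtcc ρ))

/-- Probabilistic ready-trace equivalence `≈_{PRTr}`. -/
def PRTr (s₁ s₂ : S) : Prop :=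
  ∀ ρ : List (A × Set A),
    (∀ R₁ : Resolution L s₁, ∃ R₂ : Resolution L s₂,
      R₁.prob (R₁.rtcc ρ) = R₂.prob (R₂.rtcc ρ)) ∧
    (∀ R₂ : Resolution L s₂, ∃ R₁ : Resolution L s₁,
      R₂.prob (R₂.rtcc ρ) = R₁.prob (R₁.rtcc ρ))

/-- The set of values `prob(RTCC(z_s, ρ))` over the resolutions in
`Res_{a₁…aₙ}(s)`, where `a₁…aₙ` is the trace underlying `ρ`. -/
def rtccVals (s : S) (ρ : List (A × Set A)) : Set ℝ≥0∞ :=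
  {p | ∃ R : Resolution L s, R.InResAlpha (ρ.map Prod.fst) ∧ p = R.prob (R.rtcc ρ)}

/-- Probabilistic ⊔⊓-ready-trace equivalence `≈_{PRTr,⊔⊓}`. -/
def PRTrSupInf (s₁ s₂ : S) : Prop :=
  ∀ ρ : List (A × Set A),
    sSup (rtccVals L s₁ ρ) = sSup (rtccVals L s₂ ρ) ∧
    inf0 (rtccVals L s₁ ρ) = inf0 (rtccVals L s₂ ρ)

end Equivalences

/-! ### Tests and testing equivalences -/

/-- A nondeterministic and probabilistic test (NPT): a finite NPLTS (finitely
many states, finitely many outgoing transitions per state, acyclic) with a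
distinguished success state `succ` having no outgoing transitions. -/
structure NPT (A : Type) where
  O : Type
  lts : NPLTS O A
  succ : O
  fin : Finite O
  finTrans : ∀ o : O, {p : A × PMF O | lts.trans o p.1 p.2}.Finite
  acyclic : ∀ (o : O) (c : List (A × O)), lts.IsComp o c → c ≠ [] → lastState o c ≠ o
  succ_stop : ∀ a D, ¬ lts.trans succ a D

section Testing

variable {S A : Type} (L : NPLTS S A)

/-- The set of success probabilities over the maximal resolutions of the
configuration `(s, o)` of the interaction system of `L` and `T`. -/
def scVals (T : NPT A) (s : S) (o : T.O) : Set ℝ≥0∞ :=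
  {p | ∃ R : Resolution (L.par T.lts) (s, o), R.Maximal ∧ p = R.prob (R.sc T.succ)}

/-- Probabilistic ⊔⊓-testing equivalence `≈_{PTe-⊔⊓}`. -/
def PTeSupInf (s₁ s₂ : S) : Prop :=
  ∀ (T : NPT A) (o : T.O),
    sSup (scVals L T s₁ o) = sSup (scVals L T s₂ o) ∧
    inf0 (scVals L T s₁ o) = inf0 (scVals L T s₂ o)

/-- Probabilistic ∀∃-testing equivalence `≈_{PTe-∀∃}`. -/
def PTeAE (s₁ s₂ : S) : Prop :=
  ∀ (T : NPT A) (o : T.O),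
    (∀ R₁ : Resolution (L.par T.lts) (s₁, o), R₁.Maximal →
      ∃ R₂ : Resolution (L.par T.lts) (s₂, o), R₂.Maximal ∧
        R₁.prob (R₁.sc T.succ) = R₂.prob (R₂.sc T.succ)) ∧
    (∀ R₂ : Resolution (L.par T.lts) (s₂, o), R₂.Maximal →
      ∃ R₁ : Resolution (L.par T.lts) (s₁, o), R₁.Maximal ∧
        R₂.prob (R₂.sc T.succ) = R₁.prob (R₁.sc T.succ))

/-- Probabilistic trace-by-trace-distribution testing equivalence `≈_{PTe-tbt,dis}`. -/
def PTeTbtDis (s₁ s₂ : S) : Prop :=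
  ∀ (T : NPT A) (o : T.O),
    (∀ R₁ : Resolution (L.par T.lts) (s₁, o), R₁.Maximal →
      ∃ R₂ : Resolution (L.par T.lts) (s₂, o), R₂.Maximal ∧ ∀ α : List A,
        ((R₁.ccc α).Nonempty → (R₂.ccc α).Nonempty) ∧
        R₁.prob (R₁.scc T.succ α) = R₂.prob (R₂.scc T.succ α)) ∧
    (∀ R₂ : Resolution (L.par T.lts) (s₂, o), R₂.Maximal →
      ∃ R₁ : Resolution (L.par T.lts) (s₁, o), R₁.Maximal ∧ ∀ α : List A,
        ((R₂.ccc α).Nonempty → (R₁.ccc α).Nonempty) ∧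
        R₂.prob (R₂.scc T.succ α) = R₁.prob (R₁.scc T.succ α))

/-- Probabilistic trace-by-trace testing equivalence `≈_{PTe-tbt}`. -/
def PTeTbt (s₁ s₂ : S) : Prop :=
  ∀ (T : NPT A) (o : T.O) (α : List A),
    (∀ R₁ : Resolution (L.par T.lts) (s₁, o), R₁.Maximal → (R₁.ccc α).Nonempty →
      ∃ R₂ : Resolution (L.par T.lts) (s₂, o), R₂.Maximal ∧ (R₂.ccc α).Nonempty ∧
        R₁.prob (R₁.scc T.succ α) = R₂.prob (R₂.scc T.succ α)) ∧
    (∀ R₂ : Resolution (L.par T.lts) (s₂, o), R₂.Maximal → (R₂.ccc α).Nonempty →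
      ∃ R₁ : Resolution (L.par T.lts) (s₁, o), R₁.Maximal ∧ (R₁.ccc α).Nonempty ∧
        R₂.prob (R₂.scc T.succ α) = R₁.prob (R₁.scc T.succ α))

/-- The set of values `prob(SCC(z_{s,o}, α))` over `Res_{max,C,α}(s, o)`. -/
def sccVals (T : NPT A) (s : S) (o : T.O) (α : List A) : Set ℝ≥0∞ :=
  {p | ∃ R : Resolution (L.par T.lts) (s, o), R.Maximal ∧ (R.ccc α).Nonempty ∧
    p = R.prob (R.scc T.succ α)}

/-- Probabilistic ⊔⊓-trace-by-trace testing equivalence `≈_{PTe-tbt,⊔⊓}`. -/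
def PTeTbtSupInf (s₁ s₂ : S) : Prop :=
  ∀ (T : NPT A) (o : T.O) (α : List A),
    ((∃ R : Resolution (L.par T.lts) (s₁, o), R.Maximal ∧ (R.ccc α).Nonempty) ↔
     (∃ R : Resolution (L.par T.lts) (s₂, o), R.Maximal ∧ (R.ccc α).Nonempty)) ∧
    sSup (sccVals L T s₁ o α) = sSup (sccVals L T s₂ o α) ∧
    inf0 (sccVals L T s₁ o α) = inf0 (sccVals L T s₂ o α)

end Testing

/-! ### Bisimulation equivalences -/

section Bisimulations

variable {S A : Type} (L : NPLTS S A)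

/-- `G` is a union of equivalence classes of `B` (a "group of classes"). -/
def BClosed (B : S → S → Prop) (G : Set S) : Prop :=
  ∀ x y, B x y → x ∈ G → y ∈ G

/-- A probabilistic group-distribution bisimulation. -/
def IsPBDis (B : S → S → Prop) : Prop :=
  Equivalence B ∧ ∀ s₁ s₂, B s₁ s₂ → ∀ a D₁, L.trans s₁ a D₁ →
    ∃ D₂, L.trans s₂ a D₂ ∧ ∀ G : Set S, BClosed B G → pmfMass D₁ G = pmfMass D₂ G

/-- Probabilistic group-distribution bisimilarity `≈_{PB,dis}`. -/
def PBDis (s₁ s₂ : S) : Prop := ∃ B, IsPBDis L B ∧ B s₁ s₂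

/-- A probabilistic bisimulation (class groups considered one at a time). -/
def IsPB (B : S → S → Prop) : Prop :=
  Equivalence B ∧ ∀ s₁ s₂, B s₁ s₂ → ∀ G : Set S, BClosed B G →
    ∀ a D₁, L.trans s₁ a D₁ →
      ∃ D₂, L.trans s₂ a D₂ ∧ pmfMass D₁ G = pmfMass D₂ G

/-- Probabilistic bisimilarity `≈_{PB}`. -/
def PB (s₁ s₂ : S) : Prop := ∃ B, IsPB L B ∧ B s₁ s₂

/-- The set of values `D(∪G)` over the `a`-transitions of `s`. -/
def massVals (s : S) (a : A) (G : Set S) : Set ℝ≥0∞ :=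
  {p | ∃ D, L.trans s a D ∧ p = pmfMass D G}

/-- A probabilistic ⊔⊓-bisimulation. -/
def IsPBSupInf (B : S → S → Prop) : Prop :=
  Equivalence B ∧ ∀ s₁ s₂, B s₁ s₂ → ∀ G : Set S, BClosed B G → ∀ a : A,
    ((∃ D, L.trans s₁ a D) ↔ (∃ D, L.trans s₂ a D)) ∧
    sSup (massVals L s₁ a G) = sSup (massVals L s₂ a G) ∧
    inf0 (massVals L s₁ a G) = inf0 (massVals L s₂ a G)

/-- Probabilistic ⊔⊓-bisimilarity `≈_{PB,⊔⊓}`. -/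
def PBSupInf (s₁ s₂ : S) : Prop := ∃ B, IsPBSupInf L B ∧ B s₁ s₂

/-- Classical bisimilarity of the underlying LTS of a fully nondeterministic
NPLTS, where `s →a s'` means `s →a D` with `D(s') = 1`. -/
def BFnd (s₁ s₂ : S) : Prop :=
  ∃ B : S → S → Prop, Equivalence B ∧
    (∀ t₁ t₂, B t₁ t₂ → ∀ a t₁', (∃ D, L.trans t₁ a D ∧ D t₁' = 1) →
      ∃ t₂', (∃ D, L.trans t₂ a D ∧ D t₂' = 1) ∧ B t₁' t₂') ∧
    B s₁ s₂

end Bisimulations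

end

/-! Sort the computations of a resolution by the ready trace they exhibit. A failure trace `φ` is
exhibited exactly when each ready set is contained in the complement of the corresponding failure
set, so the probability of `φ` is the sum of the ready-trace probabilities over the principal ideal
below `φᶜ`, for the componentwise inclusion of decorated traces. Conversely, the ideals form a
π-system and have finite weight, hence their weights determine those of all sets in the generated
σ-algebra. Only countably many ready traces below a given `ρ` carry any weight, so up to a set of
weight zero `{ρ}` is the ideal of `ρ` minus the countable union of the ideals of the weighted ready
traces strictly below it: the failure-trace probabilities determine the ready-trace ones. -/

section PiSystem

open MeasureTheory

variable {α : Type*}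

theorem tsum_subtype_eq_of_isPiSystem {f g : α → ℝ≥0∞} {C : Set (Set α)} (hC : IsPiSystem C)
    (hfg : ∀ s ∈ C, ∑' x : s, f x = ∑' x : s, g x) {s t : Set α} (hs : s ∈ C)
    (hfs : ∑' x : s, f x ≠ ∞) (hts : t ⊆ s)
    (ht : MeasurableSet[MeasurableSpace.generateFrom C] t) :
    ∑' x : t, f x = ∑' x : t, g x := by
  let _ : MeasurableSpace α := ⊤
  let weight (h : α → ℝ≥0∞) : Measure α :=
    (Measure.sum fun x => h x • Measure.dirac x).restrict s
  have weight_apply (h : α → ℝ≥0∞) (u : Set α) : weight h u = ∑' x : ↥(u ∩ s), h x := by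
    simp [weight, tsum_subtype, Set.indicator_apply]
  have : IsFiniteMeasure (weight f) :=
    ⟨by rw [weight_apply, Set.univ_inter]; exact hfs.lt_top⟩
  have weight_eq : ∀ u ∈ C, weight f u = weight g u := by
    intro u hu
    rw [weight_apply, weight_apply]
    rcases (u ∩ s).eq_empty_or_nonempty with hus | hus
    · simp [hus]
    · exact hfg _ (hC u hu s hs hus)
  have weight_univ : weight f Set.univ = weight g Set.univ := by
    rw [weight_apply, weight_apply, Set.univ_inter, hfg s hs]
  have weight_t : weight f t = weight g t :=
    ext_on_measurableSpace_of_generate_finite ⊤ C weight_eq le_top rfl hC weight_univ ht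
  rwa [weight_apply, weight_apply, Set.inter_eq_left.2 hts] at weight_t

/-- The family of principal lower sets `{a | r a b}` of a relation `r`, one for each `b`. -/
def lowerSets (r : α → α → Prop) : Set (Set α) := Set.range fun b => {a | r a b}

theorem exists_measurableSet_inter_subset_singleton {r : α → α → Prop} [Std.Refl r]
    [Std.Antisymm r] {T : Set α} (hT : T.Countable) (b : α) :
    ∃ D, MeasurableSet[MeasurableSpace.generateFrom (lowerSets r)] D ∧ b ∈ D ∧
      D ⊆ {a | r a b} ∧ D ∩ T ⊆ {b} := by
  have measurable_lower (c : α) :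
      MeasurableSet[MeasurableSpace.generateFrom (lowerSets r)] {a | r a c} :=
    MeasurableSpace.measurableSet_generateFrom ⟨c, rfl⟩
  refine ⟨{a | r a b} \ ⋃ c ∈ {c ∈ T | r c b ∧ c ≠ b}, {a | r a c},
    (measurable_lower b).diff (.biUnion (hT.mono (Set.sep_subset _ _)) fun c _ =>
      measurable_lower c), ⟨refl_of r b, fun hb => ?_⟩, Set.sdiff_subset, fun a ha => ?_⟩
  · obtain ⟨c, ⟨-, hcb, hne⟩, hbc⟩ := Set.mem_iUnion₂.1 hb
    exact hne (antisymm_of r hcb hbc)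
  · by_contra hab
    exact ha.1.2 (Set.mem_biUnion (x := a) ⟨ha.2, ha.1.1, hab⟩ (refl_of r a))

theorem countable_inter_support {f : α → ℝ≥0∞} {s : Set α} (hf : ∑' x : s, f x ≠ ∞) :
    (s ∩ f.support).Countable := by
  rw [tsum_subtype] at hf
  simpa only [Set.support_indicator] using Summable.countable_support_ennreal hf

theorem tsum_subtype_eq_apply {f : α → ℝ≥0∞} {s : Set α} {b : α} (hb : b ∈ s)
    (hs : s ∩ f.support ⊆ {b}) : ∑' x : s, f x = f b :=
  tsum_eq_single (⟨b, hb⟩ : s) fun a hab =>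
    by_contra fun ha => hab (Subtype.ext (hs ⟨a.2, ha⟩))

theorem eq_of_tsum_lowerSets_eq {r : α → α → Prop} [Std.Refl r] [Std.Antisymm r]
    (hr : IsPiSystem (lowerSets r)) {f g : α → ℝ≥0∞} (hf : ∀ s ∈ lowerSets r, ∑' x : s, f x ≠ ∞)
    (hfg : ∀ s ∈ lowerSets r, ∑' x : s, f x = ∑' x : s, g x) : f = g := by
  funext b
  have hb : {a | r a b} ∈ lowerSets r := ⟨b, rfl⟩
  have hT := (countable_inter_support (hf _ hb)).union
    (countable_inter_support (hfg _ hb ▸ hf _ hb))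
  obtain ⟨D, hD, hbD, hDb, hDT⟩ := exists_measurableSet_inter_subset_singleton (r := r) hT b
  calc f b
      = ∑' x : D, f x := (tsum_subtype_eq_apply hbD fun a ha =>
          hDT ⟨ha.1, .inl ⟨hDb ha.1, ha.2⟩⟩).symm
    _ = ∑' x : D, g x := tsum_subtype_eq_of_isPiSystem hr hfg hb (hf _ hb) hDb hD
    _ = g b := tsum_subtype_eq_apply hbD fun a ha => hDT ⟨ha.1, .inr ⟨hDb ha.1, ha.2⟩⟩

theorem isPiSystem_lowerSets_iff {r : α → α → Prop} :
    IsPiSystem (lowerSets r) ↔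
      ∀ a b c, r a b → r a c → ∃ d, ∀ x, r x d ↔ r x b ∧ r x c := by
  constructor
  · intro h a b c hab hac
    obtain ⟨d, hd⟩ := h _ ⟨b, rfl⟩ _ ⟨c, rfl⟩ ⟨a, hab, hac⟩
    exact ⟨d, Set.ext_iff.1 hd⟩
  · rintro h _ ⟨b, rfl⟩ _ ⟨c, rfl⟩ ⟨a, hab, hac⟩
    obtain ⟨d, hd⟩ := h a b c hab hac
    exact ⟨d, Set.ext hd⟩

theorem isPiSystem_lowerSets_forall₂ {r : α → α → Prop} (hr : IsPiSystem (lowerSets r)) :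
    IsPiSystem (lowerSets (List.Forall₂ r)) := by
  rw [isPiSystem_lowerSets_iff] at hr ⊢
  intro k l m hkl hkm
  induction hkl generalizing m with
  | nil => exact ⟨[], fun x => by cases hkm; exact (and_self_iff).symm⟩
  | @cons a b k l hab _ ih =>
    obtain _ | @⟨_, c, _, m, hac, hkm⟩ := hkm
    obtain ⟨d, hd⟩ := hr a b c hab hac
    obtain ⟨n, hn⟩ := ih m hkm
    refine ⟨d :: n, fun x => ?_⟩
    cases x with
    | nil => simp
    | cons x xs => simp only [List.forall₂_cons, hd, hn, and_and_and_comm]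

instance refl_forall₂ (r : α → α → Prop) [Std.Refl r] : Std.Refl (List.Forall₂ r) where
  refl := List.forall₂_refl

instance antisymm_forall₂ (r : α → α → Prop) [Std.Antisymm r] :
    Std.Antisymm (List.Forall₂ r) where
  antisymm k l hkl hlk := by
    induction hkl with
    | nil => rfl
    | cons hab _ ih =>
      obtain _ | ⟨hba, hlk⟩ := hlk
      rw [antisymm_of r hab hba, ih hlk]

end PiSystem

namespace NPLTS

variable {S A : Type} {L : NPLTS S A}

theorem probSet_mono {s : S} {C C' : Set (List (A × S))} (h : C ⊆ C') :
    L.probSet s C ≤ L.probSet s C' :=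
  ENNReal.tsum_mono_subtype _ h

theorem probSet_image_cons (s s' : S) (a : A) (C : Set (List (A × S))) :
    L.probSet s (List.cons (a, s') '' C) =
      (⨆ (D : PMF S) (_ : L.trans s a D), D s') * L.probSet s' C := by
  simp only [probSet, tsum_image _ List.cons_injective.injOn, compProb, ENNReal.tsum_mul_left]

namespace FullyProbabilistic

theorem tsum_iSup_trans_le_one (hL : L.FullyProbabilistic) (s : S) (a : A) :
    ∑' s', ⨆ (D : PMF S) (_ : L.trans s a D), D s' ≤ 1 := by
  by_cases h : ∃ D, L.trans s a D
  · obtain ⟨D, hD⟩ := h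
    rw [← D.tsum_coe]
    refine ENNReal.tsum_le_tsum fun s' => iSup₂_le fun D' hD' => ?_
    rw [(hL s a D' a D hD' hD).2]
  · simp [not_exists.1 h]

theorem probSet_traceOf_le_one (hL : L.FullyProbabilistic) (s : S) (α : List A) :
    L.probSet s {c | traceOf c = α} ≤ 1 := by
  induction α generalizing s with
  | nil =>
    have : {c : List (A × S) | traceOf c = []} = {[]} := by ext c; simp [traceOf]
    rw [this, probSet, tsum_singleton [] (L.compProb s), compProb]
  | cons a α ih =>
    have hsplit : {c : List (A × S) | traceOf c = a :: α} =
        ⋃ s', List.cons (a, s') '' {c | traceOf c = α} := by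
      ext c
      rcases c with _ | ⟨⟨b, s'⟩, c⟩
      · simp [traceOf]
      · simp [traceOf, and_comm, @eq_comm _ a b]
    calc L.probSet s {c | traceOf c = a :: α}
        ≤ ∑' s', L.probSet s (List.cons (a, s') '' {c | traceOf c = α}) := by
          rw [hsplit]; exact ENNReal.tsum_iUnion_le_tsum _ _
      _ ≤ ∑' s', ⨆ (D : PMF S) (_ : L.trans s a D), D s' := by
          refine ENNReal.tsum_le_tsum fun s' => ?_
          rw [probSet_image_cons]
          exact mul_le_of_le_one_right' (ih s')
      _ ≤ 1 := hL.tsum_iSup_trans_le_one s a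

end FullyProbabilistic

end NPLTS

/-- Inclusion of decorated actions: equal actions, included sets. Applied stepwise it orders
decorated traces. -/
def decoLE {A : Type} (p q : A × Set A) : Prop := p.1 = q.1 ∧ p.2 ⊆ q.2

instance decoLE.refl {A : Type} : Std.Refl (decoLE (A := A)) := ⟨fun _ => ⟨rfl, subset_rfl⟩⟩

instance decoLE.antisymm {A : Type} : Std.Antisymm (decoLE (A := A)) :=
  ⟨fun _ _ hpq hqp => Prod.ext hpq.1 (hpq.2.antisymm hqp.2)⟩

theorem isPiSystem_lowerSets_decoLE {A : Type} : IsPiSystem (lowerSets (decoLE (A := A))) := by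
  rw [isPiSystem_lowerSets_iff]
  rintro ⟨a, X⟩ ⟨b, Y⟩ ⟨c, Z⟩ ⟨rfl, -⟩ ⟨rfl, -⟩
  refine ⟨(a, Y ∩ Z), fun p => ?_⟩
  rw [decoLE, decoLE, decoLE, Set.subset_inter_iff, and_and_left]

/-- The failure trace whose failure sets are the complements of the sets of a decorated trace, and
vice versa. -/
def decoCompl {A : Type} (φ : List (A × Set A)) : List (A × Set A) := φ.map (Prod.map id compl)

theorem decoCompl_decoCompl {A : Type} (φ : List (A × Set A)) : decoCompl (decoCompl φ) = φ := by
  simp [decoCompl, Prod.map, Function.comp_def]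

theorem decoComp_iff_forall₂ {S A Z : Type} {P : S → Set A → Prop} {corr : Z → S}
    {c : List (A × Z)} {φ : List (A × Set A)} :
    decoComp P corr c φ ↔ List.Forall₂ (fun p q => p.1 = q.1 ∧ P (corr p.2) q.2) c φ := by
  induction c generalizing φ with
  | nil => cases φ <;> simp [decoComp]
  | cons p c ih => cases φ <;> simp [decoComp, ih, and_assoc]

namespace Resolution

variable {S A : Type} {L : NPLTS S A} {s : S}

/-- The ready trace exhibited by a computation of a resolution: its actions, each paired with the
set of actions enabled, in the original NPLTS, at the state reached. -/
def readyTrace (R : Resolution L s) (c : List (A × R.State)) : List (A × Set A) :=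
  c.map (Prod.map id (L.enabled ∘ R.corr))

theorem mem_rtcc_iff (R : Resolution L s) {ρ : List (A × Set A)} {c : List (A × R.State)} :
    c ∈ R.rtcc ρ ↔ R.lts.IsComp R.init c ∧ R.readyTrace c = ρ := by
  rw [← List.forall₂_eq_eq_eq]
  simp only [rtcc, Set.mem_ofPred_eq, decoComp_iff_forall₂, readyTrace, List.forall₂_map_left_iff,
    Prod.ext_iff, Prod.map_fst, Prod.map_snd, id, Function.comp_apply]

theorem mem_ftcc_iff (R : Resolution L s) {φ : List (A × Set A)} {c : List (A × R.State)} :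
    c ∈ R.ftcc φ ↔
      R.lts.IsComp R.init c ∧ List.Forall₂ decoLE (R.readyTrace c) (decoCompl φ) := by
  simp only [ftcc, Set.mem_ofPred_eq, decoComp_iff_forall₂, readyTrace, decoCompl,
    List.forall₂_map_left_iff, List.forall₂_map_right_iff, decoLE, Prod.map_fst, Prod.map_snd, id,
    Function.comp_apply, Set.subset_compl_iff_disjoint_left, Set.disjoint_left]

theorem prob_ftcc_eq_tsum (R : Resolution L s) (φ : List (A × Set A)) :
    R.prob (R.ftcc φ) =
      ∑' ρ : {ρ | List.Forall₂ decoLE ρ (decoCompl φ)}, R.prob (R.rtcc ρ) := by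
  have hsplit : R.ftcc φ = ⋃ ρ ∈ {ρ | List.Forall₂ decoLE ρ (decoCompl φ)}, R.rtcc ρ := by
    ext c
    simp [mem_ftcc_iff, mem_rtcc_iff, and_comm]
  have hdisj : {ρ | List.Forall₂ decoLE ρ (decoCompl φ)}.PairwiseDisjoint R.rtcc := by
    intro ρ _ ρ' _ hne
    refine Set.disjoint_left.2 fun c hc hc' => hne ?_
    rw [← (R.mem_rtcc_iff.1 hc).2, (R.mem_rtcc_iff.1 hc').2]
  rw [hsplit]
  exact ENNReal.tsum_biUnion' hdisj

theorem tsum_prob_rtcc (R : Resolution L s) (ρ : List (A × Set A)) :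
    ∑' ρ' : {ρ' | List.Forall₂ decoLE ρ' ρ}, R.prob (R.rtcc ρ') =
      R.prob (R.ftcc (decoCompl ρ)) := by
  rw [prob_ftcc_eq_tsum, decoCompl_decoCompl]

theorem traceOf_eq_of_mem_ftcc (R : Resolution L s) {φ : List (A × Set A)}
    {c : List (A × R.State)} (hc : c ∈ R.ftcc φ) : traceOf c = φ.map Prod.fst := by
  have h := decoComp_iff_forall₂.1 hc.2
  rw [traceOf, ← List.forall₂_eq_eq_eq, List.forall₂_map_left_iff, List.forall₂_map_right_iff]
  exact h.imp fun _ _ hpq => hpq.1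

theorem prob_ftcc_ne_top (R : Resolution L s) (φ : List (A × Set A)) : R.prob (R.ftcc φ) ≠ ∞ := by
  refine ne_top_of_le_ne_top ENNReal.one_ne_top ?_
  calc R.prob (R.ftcc φ)
      ≤ R.prob {c | traceOf c = φ.map Prod.fst} :=
        NPLTS.probSet_mono fun _ => R.traceOf_eq_of_mem_ftcc
    _ ≤ 1 := NPLTS.FullyProbabilistic.probSet_traceOf_le_one
        (fun z a₁ D₁ a₂ D₂ => R.det z a₁ a₂ D₁ D₂) R.init _

theorem prob_ftcc_eq_iff_prob_rtcc_eq {S' : Type} {L' : NPLTS S' A} {s' : S'}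
    (R : Resolution L s) (R' : Resolution L' s') :
    (∀ φ, R.prob (R.ftcc φ) = R'.prob (R'.ftcc φ)) ↔
      ∀ ρ, R.prob (R.rtcc ρ) = R'.prob (R'.rtcc ρ) := by
  refine ⟨fun h => congrFun ?_, fun h φ => by simp only [prob_ftcc_eq_tsum, h]⟩
  refine eq_of_tsum_lowerSets_eq (isPiSystem_lowerSets_forall₂ isPiSystem_lowerSets_decoLE) ?_ ?_
  · rintro _ ⟨ρ, rfl⟩
    rw [R.tsum_prob_rtcc]
    exact R.prob_ftcc_ne_top (decoCompl ρ)
  · rintro _ ⟨ρ, rfl⟩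
    rw [R.tsum_prob_rtcc, R'.tsum_prob_rtcc, h]

end Resolution

theorem prtr_dis_eq_pftr_dis_of_finitelyBranching_general
    {S A : Type} (L : NPLTS S A) (s₁ s₂ : S) :
    PRTrDis L s₁ s₂ ↔ PFTrDis L s₁ s₂ := by
  simp only [PRTrDis, PFTrDis, Resolution.prob_ftcc_eq_iff_prob_rtcc_eq]

/-- over finitely-branching NPLTS models, `≈_{PRTr,dis} = ≈_{PFTr,dis}`. -/
theorem prtr_dis_eq_pftr_dis_of_finitelyBranching
    {S A : Type} [Countable S] [Countable A] (L : NPLTS S A)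
    (hfb : L.FinitelyBranching) (s₁ s₂ : S) :
    PRTrDis L s₁ s₂ ↔ PFTrDis L s₁ s₂ :=
  prtr_dis_eq_pftr_dis_of_finitelyBranching_general L s₁ s₂
end

section
/- Over finitely-branching NPLTS models, probabilistic readiness-distribution equivalence coincides with probabilistic failure-distribution equivalence: for every finitely-branching NPLTS (S, A, →) and all s1, s2 ∈ S, s1 ≈_{PR,dis} s2 if and only if s1 ≈_{PF,dis} s2. -/
open scoped ENNReal
open Classical

/-!
Fix a trace `α`. A resolution induces a weight on ready sets, `X ↦ prob(RCC(α, X))`, of total mass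
at most `1`, and `prob(FCC(α, F))` is its mass on the lower set `{X | X ⊆ Fᶜ}`. Hence ready weights
determine failure probabilities. Conversely, the masses of all lower sets determine, by
inclusion-exclusion, the masses of the intervals `{X | T ⊆ X ⊆ Y}` with `T` finite. As `T` grows
these decrease to the weight of `Y`: up to `ε` the mass sits on finitely many sets, and each proper
subset of `Y` among them is excluded by putting a single action of `Y` into `T`.
-/

section SetWeights

variable {A : Type*} {p q : Set A → ℝ≥0∞}

theorem tsum_Icc_eq_tsum_Icc_insert_add (p : Set A → ℝ≥0∞) (a : A) (T Y : Set A) :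
    ∑' X : Set.Icc T Y, p X =
      ∑' X : Set.Icc (insert a T) Y, p X + ∑' X : Set.Icc T (Y \ {a}), p X := by
  have hunion : Set.Icc T Y = Set.Icc (insert a T) Y ∪ Set.Icc T (Y \ {a}) := by
    ext X
    simp only [Set.mem_union, Set.mem_Icc, Set.insert_subset_iff,
      Set.subset_sdiff, Set.disjoint_singleton_right]
    tauto
  have hdisj : Disjoint (Set.Icc (insert a T) Y) (Set.Icc T (Y \ {a})) :=
    Set.disjoint_left.2 fun X hX hX' => (hX'.2 (hX.1 (Set.mem_insert a T))).2 rfl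
  rw [hunion, ENNReal.summable.tsum_union_disjoint hdisj ENNReal.summable]

theorem tsum_Icc_eq_of_tsum_Iic_eq (hp : ∑' X, p X ≠ ∞)
    (h : ∀ Y : Set A, ∑' X : Set.Iic Y, p X = ∑' X : Set.Iic Y, q X) {T : Set A} (hT : T.Finite)
    (Y : Set A) : ∑' X : Set.Icc T Y, p X = ∑' X : Set.Icc T Y, q X := by
  induction T, hT using Set.Finite.induction_on generalizing Y with
  | empty =>
    have hIcc : Set.Icc ∅ Y = Set.Iic Y := Set.Icc_bot
    rw [hIcc, h Y]
  | @insert a T _ _ ih =>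
    have hfin : ∑' X : Set.Icc T (Y \ {a}), p X ≠ ∞ :=
      ne_top_of_le_ne_top hp (ENNReal.tsum_comp_le_tsum_of_injective Subtype.val_injective p)
    have hsplit := ih Y
    rw [tsum_Icc_eq_tsum_Icc_insert_add p a, tsum_Icc_eq_tsum_Icc_insert_add q a,
      ← ih (Y \ {a})] at hsplit
    exact (ENNReal.add_left_inj hfin).1 hsplit

theorem exists_finite_subset_tsum_Icc_le (hp : ∑' X, p X ≠ ∞) (Y : Set A) {ε : ℝ≥0∞}
    (hε : ε ≠ 0) : ∃ T ⊆ Y, T.Finite ∧ ∑' X : Set.Icc T Y, p X ≤ p Y + ε := by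
  obtain ⟨s, hs⟩ : ∃ s : Finset (Set A), ∑' X : {X // X ∉ s}, p X ≤ ε :=
    ((ENNReal.tendsto_tsum_compl_atTop_zero hp).eventually_le_const
      (pos_iff_ne_zero.2 hε)).exists
  choose a haY haX using fun (X : Set A) (hX : X ⊂ Y) => Set.exists_of_ssubset hX
  have : Finite {X | X ∈ s ∧ X ⊂ Y} := (s.finite_toSet.subset fun _ hX => hX.1).to_subtype
  let T : Set A := Set.range fun X : {X | X ∈ s ∧ X ⊂ Y} => a X X.2.2
  have hsub : Set.Icc T Y ⊆ {Y} ∪ {X | X ∉ s} := by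
    rintro X ⟨hTX, hXY⟩
    refine or_iff_not_imp_left.2 fun hne hXs => ?_
    have hX : X ⊂ Y := hXY.ssubset_of_ne hne
    exact haX X hX (hTX ⟨⟨X, hXs, hX⟩, rfl⟩)
  refine ⟨T, Set.range_subset_iff.2 fun X => haY X X.2.2, Set.finite_range _, ?_⟩
  calc ∑' X : Set.Icc T Y, p X
      ≤ ∑' X : ({Y} ∪ {X | X ∉ s} : Set (Set A)), p X := ENNReal.tsum_mono_subtype p hsub
    _ ≤ ∑' X : ({Y} : Set (Set A)), p X + ∑' X : {X | X ∉ s}, p X := ENNReal.tsum_union_le p _ _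
    _ ≤ p Y + ε := by
      rw [tsum_singleton]
      exact add_le_add_right hs _

theorem tsum_eq_of_tsum_Iic_eq
    (h : ∀ Y : Set A, ∑' X : Set.Iic Y, p X = ∑' X : Set.Iic Y, q X) :
    ∑' X, p X = ∑' X, q X := by
  rw [← tsum_univ p, ← tsum_univ q, ← Set.Iic_top, h ⊤]

theorem le_of_tsum_Iic_eq (hp : ∑' X, p X ≠ ∞)
    (h : ∀ Y : Set A, ∑' X : Set.Iic Y, p X = ∑' X : Set.Iic Y, q X) : p ≤ q := by
  intro Y
  have hq : ∑' X, q X ≠ ∞ := tsum_eq_of_tsum_Iic_eq h ▸ hp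
  refine ENNReal.le_of_forall_pos_le_add fun ε hε _ => ?_
  obtain ⟨T, hTY, hT, hle⟩ :=
    exists_finite_subset_tsum_Icc_le hq Y (ENNReal.coe_ne_zero.2 hε.ne')
  calc p Y ≤ ∑' X : Set.Icc T Y, p X :=
        ENNReal.le_tsum (f := fun X : Set.Icc T Y => p X) ⟨Y, hTY, le_rfl⟩
    _ = ∑' X : Set.Icc T Y, q X := tsum_Icc_eq_of_tsum_Iic_eq hp h hT Y
    _ ≤ q Y + ε := hle

theorem eq_of_tsum_Iic_eq (hp : ∑' X, p X ≠ ∞)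
    (h : ∀ Y : Set A, ∑' X : Set.Iic Y, p X = ∑' X : Set.Iic Y, q X) : p = q :=
  (le_of_tsum_Iic_eq hp h).antisymm
    (le_of_tsum_Iic_eq (tsum_eq_of_tsum_Iic_eq h ▸ hp) fun Y => (h Y).symm)

end SetWeights

namespace NPLTS

variable {S A : Type}

/-- The supremal probability of reaching `s'` from `s` by an `a`-transition, `0` if there is none:
the factor that such a step contributes to `compProb`. -/
noncomputable def stepProb (L : NPLTS S A) (s : S) (a : A) (s' : S) : ℝ≥0∞ :=
  ⨆ (D : PMF S) (_ : L.trans s a D), D s'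

theorem FullyProbabilistic.tsum_stepProb_le_one {L : NPLTS S A} (hL : L.FullyProbabilistic)
    (s : S) (a : A) : ∑' s', L.stepProb s a s' ≤ 1 := by
  by_cases h : ∃ D, L.trans s a D
  · obtain ⟨D, hD⟩ := h
    calc ∑' s', L.stepProb s a s'
        ≤ ∑' s', D s' := ENNReal.tsum_le_tsum fun s' =>
          iSup₂_le fun D' hD' => by rw [(hL s a D a D' hD hD').2]
      _ = 1 := D.tsum_coe
  · have hnone (D : PMF S) : ¬ L.trans s a D := fun hD => h ⟨D, hD⟩
    simp [stepProb, hnone]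

theorem probSet_setOf_traceOf_cons_le (L : NPLTS S A) (s : S) (a : A) (α : List A) :
    L.probSet s {c | traceOf c = a :: α} ≤
      ∑' s', L.stepProb s a s' * L.probSet s' {c | traceOf c = α} := by
  have hcover : {c : List (A × S) | traceOf c = a :: α} ⊆
      ⋃ s', List.cons (a, s') '' {c | traceOf c = α} := by
    intro c hc
    obtain ⟨⟨_, s'⟩, c', rfl, rfl, hc'⟩ := List.map_eq_cons_iff.1 hc
    exact Set.mem_iUnion.2 ⟨s', c', hc', rfl⟩
  calc L.probSet s {c | traceOf c = a :: α}
      ≤ ∑' c : (⋃ s', List.cons (a, s') '' {c | traceOf c = α} : Set (List (A × S))),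
          L.compProb s c.1 :=
        ENNReal.tsum_mono_subtype (L.compProb s) hcover
    _ ≤ ∑' s', ∑' c : List.cons (a, s') '' {c | traceOf c = α}, L.compProb s c.1 :=
        ENNReal.tsum_iUnion_le_tsum (L.compProb s) _
    _ = ∑' s', L.stepProb s a s' * L.probSet s' {c | traceOf c = α} :=
      tsum_congr fun s' => by
        rw [tsum_image _ List.cons_injective.injOn]
        exact ENNReal.tsum_mul_left

theorem FullyProbabilistic.probSet_setOf_traceOf_le_one {L : NPLTS S A}
    (hL : L.FullyProbabilistic) (α : List A) (s : S) :
    L.probSet s {c | traceOf c = α} ≤ 1 := by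
  induction α generalizing s with
  | nil =>
    have hnil : {c : List (A × S) | traceOf c = []} = {[]} := Set.ext fun _ => List.map_eq_nil_iff
    rw [probSet, hnil, tsum_singleton, compProb]
  | cons a α ih =>
    calc L.probSet s {c | traceOf c = a :: α}
        ≤ ∑' s', L.stepProb s a s' * L.probSet s' {c | traceOf c = α} :=
          L.probSet_setOf_traceOf_cons_le s a α
      _ ≤ ∑' s', L.stepProb s a s' :=
          ENNReal.tsum_le_tsum fun s' => mul_le_of_le_one_right' (ih s')
      _ ≤ 1 := hL.tsum_stepProb_le_one s a

end NPLTS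

namespace Resolution

variable {S T A : Type} {L : NPLTS S A} {M : NPLTS T A} {s : S} {t : T}

theorem fullyProbabilistic (R : Resolution L s) : R.lts.FullyProbabilistic :=
  fun z a₁ D₁ a₂ D₂ => R.det z a₁ a₂ D₁ D₂

theorem prob_cc_le_one (R : Resolution L s) (α : List A) : R.prob (R.cc α) ≤ 1 :=
  (ENNReal.tsum_mono_subtype _ fun _ hc => hc.2).trans
    (R.fullyProbabilistic.probSet_setOf_traceOf_le_one α R.init)

theorem pairwiseDisjoint_rcc (R : Resolution L s) (α : List A) (𝒳 : Set (Set A)) :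
    𝒳.PairwiseDisjoint (R.rcc α) := fun _ _ _ _ hne =>
  Set.disjoint_left.2 fun _ hX hY => hne (hX.2.symm.trans hY.2)

theorem tsum_prob_rcc_le_one (R : Resolution L s) (α : List A) :
    ∑' X, R.prob (R.rcc α X) ≤ 1 :=
  calc ∑' X, R.prob (R.rcc α X)
      = R.prob (⋃ X, R.rcc α X) :=
        (ENNReal.tsum_biUnion (R.pairwiseDisjoint_rcc α Set.univ)).symm
    _ ≤ R.prob (R.cc α) :=
        ENNReal.tsum_mono_subtype _ (Set.iUnion_subset fun _ _ hc => hc.1)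
    _ ≤ 1 := R.prob_cc_le_one α

theorem fcc_eq_biUnion_rcc (R : Resolution L s) (α : List A) (F : Set A) :
    R.fcc α F = ⋃ X ∈ Set.Iic Fᶜ, R.rcc α X := by
  ext c
  simp only [fcc, rcc, Set.mem_iUnion, Set.mem_Iic, exists_prop, Set.mem_ofPred_eq,
    Set.subset_compl_iff_disjoint_left, Set.disjoint_left]
  exact ⟨fun ⟨hc, hF⟩ => ⟨_, hF, hc, rfl⟩, fun ⟨_, hF, hc, hX⟩ => ⟨hc, hX ▸ hF⟩⟩

theorem prob_fcc_eq_tsum_prob_rcc (R : Resolution L s) (α : List A) (F : Set A) :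
    R.prob (R.fcc α F) = ∑' X : Set.Iic Fᶜ, R.prob (R.rcc α X) := by
  rw [fcc_eq_biUnion_rcc]
  exact ENNReal.tsum_biUnion' (R.pairwiseDisjoint_rcc α _)

theorem forall_prob_rcc_eq_iff_forall_prob_fcc_eq (R : Resolution L s) (Q : Resolution M t)
    (α : List A) :
    (∀ X, R.prob (R.rcc α X) = Q.prob (Q.rcc α X)) ↔
      ∀ F, R.prob (R.fcc α F) = Q.prob (Q.fcc α F) := by
  simp only [prob_fcc_eq_tsum_prob_rcc]
  refine ⟨fun h F => tsum_congr fun X => h X, fun h => congrFun ?_⟩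
  have hmass : ∑' X, R.prob (R.rcc α X) ≠ ∞ :=
    ne_top_of_le_ne_top ENNReal.one_ne_top (R.tsum_prob_rcc_le_one α)
  exact eq_of_tsum_Iic_eq hmass (compl_surjective.forall.2 h)

end Resolution

theorem pr_dis_eq_pf_dis_of_finitelyBranching_general {S A : Type} (L : NPLTS S A) (s₁ s₂ : S) :
    PRDis L s₁ s₂ ↔ PFDis L s₁ s₂ := by
  simp only [PRDis, PFDis, Resolution.forall_prob_rcc_eq_iff_forall_prob_fcc_eq]

/-- over finitely-branching NPLTS models, `≈_{PR,dis} = ≈_{PF,dis}`. -/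
theorem pr_dis_eq_pf_dis_of_finitelyBranching
    {S A : Type} [Countable S] [Countable A] (L : NPLTS S A)
    (hfb : L.FinitelyBranching) (s₁ s₂ : S) :
    PRDis L s₁ s₂ ↔ PFDis L s₁ s₂ :=
  pr_dis_eq_pf_dis_of_finitelyBranching_general L s₁ s₂
end

section
/- For every NPLTS (S, A, →) and all states s1, s2 ∈ S, the following chain of inclusions holds among the distribution-based equivalences: s1 ≈_{PFTr,dis} s2 implies s1 ≈_{PF,dis} s2, which implies s1 ≈_{PCTr,dis} s2, which implies s1 ≈_{PTr,dis} s2. -/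
open scoped ENNReal
open Classical

/-!
A failure pair `(α, F)` with `α = a₁ … aₙ` nonempty is observed by the same computations as the
failure trace `(a₁, ∅) … (aₙ₋₁, ∅) (aₙ, F)`. For `α` empty no failure trace records `F`, and the
pair asks which actions are enabled initially. These are visible in the failure traces `(a, ∅)`:
an action `a` is enabled at `s` iff some resolution of `s` gives `(a, ∅)` positive probability.
Completed traces and traces are the failure pairs `(α, A)` and `(α, ∅)`.
-/

namespace NPLTS

variable {S A : Type} {L : NPLTS S A}

theorem compProb_ne_zero_of_isComp {s : S} {c : List (A × S)} (hc : L.IsComp s c) :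
    L.compProb s c ≠ 0 := by
  induction c generalizing s with
  | nil => exact one_ne_zero
  | cons p c ih =>
    obtain ⟨⟨D, hD, hp⟩, hc⟩ := hc
    have hle : D p.2 ≤ ⨆ (E : PMF S) (_ : L.trans s p.1 E), E p.2 :=
      le_iSup₂_of_le D hD le_rfl
    have hpos : 0 < D p.2 := pos_iff_ne_zero.2 ((D.mem_support_iff p.2).1 hp)
    exact mul_ne_zero (hpos.trans_le hle).ne' (ih hc)

theorem probSet_ne_zero_iff {s : S} {C : Set (List (A × S))} (hC : ∀ c ∈ C, L.IsComp s c) :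
    L.probSet s C ≠ 0 ↔ C.Nonempty := by
  simp only [probSet, ne_eq, ENNReal.tsum_eq_zero, not_forall]
  constructor
  · rintro ⟨c, -⟩
    exact ⟨c, c.2⟩
  · rintro ⟨c, hc⟩
    exact ⟨⟨c, hc⟩, compProb_ne_zero_of_isComp (hC c hc)⟩

end NPLTS

/-- The restriction of a discrete distribution to a set `G` containing its support. -/
noncomputable def pmfRestrict {S : Type} (D : PMF S) {G : Set S} (hG : D.support ⊆ G) : PMF G :=
  ⟨fun x => D x, (hasSum_subtype_iff_of_support_subset hG).2 D.hasSum_coe_one⟩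

theorem decoComp_map_append_singleton_iff {S A Z : Type} {P : S → Set A → Prop} {X : Set A}
    (hX : ∀ t, P t X) (corr : Z → S) (z : Z) (c : List (A × Z)) (α : List A) (a : A)
    (F : Set A) :
    decoComp P corr c (α.map (·, X) ++ [(a, F)]) ↔
      traceOf c = α ++ [a] ∧ P (corr (lastState z c)) F := by
  induction α generalizing z c with
  | nil =>
    match c with
    | [] => simp [decoComp, traceOf]
    | [p] => simp [decoComp, traceOf, lastState]
    | p :: q :: c => simp [decoComp, traceOf]
  | cons b α ih =>
    match c with
    | [] => simp [decoComp, traceOf]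
    | p :: c => simp [decoComp, ih p.2, hX, traceOf, lastState, and_assoc]

namespace Resolution

variable {S A : Type} {L : NPLTS S A} {s s₁ s₂ : S}

theorem fcc_empty (R : Resolution L s) (α : List A) : R.fcc α ∅ = R.cc α := by
  simp [fcc]

theorem fcc_univ (R : Resolution L s) (α : List A) : R.fcc α Set.univ = R.ccc α := by
  simp [fcc, ccc, NPLTS.enabled, NPLTS.hasTrans]

theorem ftcc_map_append_singleton (R : Resolution L s) (α : List A) (a : A) (F : Set A) :
    R.ftcc (α.map (·, ∅) ++ [(a, F)]) = R.fcc (α ++ [a]) F := by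
  have h_empty (t : S) : ∀ f ∈ (∅ : Set A), f ∉ L.enabled t := fun f hf => hf.elim
  ext c
  simp only [ftcc, fcc, cc, Set.mem_ofPred_eq, and_assoc,
    decoComp_map_append_singleton_iff (P := fun t F => ∀ f ∈ F, f ∉ L.enabled t)
      h_empty R.corr R.init]

theorem cc_nil (R : Resolution L s) : R.cc [] = {[]} := by
  ext c
  cases c <;> simp [cc, NPLTS.IsComp, traceOf]

theorem prob_singleton_nil (R : Resolution L s) : R.prob {[]} = 1 := by
  simp [prob, NPLTS.probSet, NPLTS.compProb]

theorem prob_fcc_nil (R : Resolution L s) (F : Set A) :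
    R.prob (R.fcc [] F) = if Disjoint F (L.enabled s) then 1 else 0 := by
  have h_fcc : R.fcc [] F = {c | c = [] ∧ Disjoint F (L.enabled s)} := by
    ext c
    simp only [fcc, cc_nil, Set.mem_ofPred_eq, Set.mem_singleton_iff, Set.disjoint_left]
    refine and_congr_right ?_
    rintro rfl
    rw [lastState, R.corr_init]
  split_ifs with hF
  · simpa [h_fcc, hF] using R.prob_singleton_nil
  · simp [h_fcc, hF, prob, NPLTS.probSet]

/-- The resolution that performs the transition `s →a D` and then stops. Its states are `s` and the
support of `D`, which keeps it countable over any state space. -/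
noncomputable def singleStep {a : A} {D : PMF S} (h : L.trans s a D) : Resolution L s where
  State := ↥(insert s D.support)
  countable := (D.support_countable.insert s).to_subtype
  lts := ⟨fun z b E => z.1 = s ∧ b = a ∧ E = pmfRestrict D (Set.subset_insert s _)⟩
  corr := Subtype.val
  init := ⟨s, Set.mem_insert s _⟩
  corr_init := rfl
  mimic := by
    rintro z _ _ ⟨hz, rfl, rfl⟩
    exact ⟨D, hz.symm ▸ h, fun _ => rfl⟩
  det := by
    rintro _ _ _ _ _ ⟨_, rfl, rfl⟩ ⟨_, rfl, rfl⟩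
    exact ⟨rfl, rfl⟩

theorem singleStep_ftcc_nonempty {a : A} {D : PMF S} (h : L.trans s a D) :
    ((singleStep h).ftcc [(a, ∅)]).Nonempty := by
  obtain ⟨t, ht⟩ := D.support_nonempty
  refine ⟨[(a, ⟨t, Set.mem_insert_of_mem s ht⟩)], ⟨⟨_, ⟨rfl, rfl, rfl⟩, ?_⟩, trivial⟩, ?_⟩
  · exact ht
  · simp [decoComp]

theorem prob_ftcc_ne_zero_iff (R : Resolution L s) (φ : List (A × Set A)) :
    R.prob (R.ftcc φ) ≠ 0 ↔ (R.ftcc φ).Nonempty :=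
  NPLTS.probSet_ne_zero_iff fun _ hc => hc.1

theorem mem_enabled_of_ftcc_cons_nonempty (R : Resolution L s) {a : A} {F : Set A}
    {φ : List (A × Set A)} (h : (R.ftcc ((a, F) :: φ)).Nonempty) : a ∈ L.enabled s := by
  obtain ⟨_ | ⟨p, c⟩, hc, hφ⟩ := h
  · exact hφ.elim
  · obtain ⟨⟨D, hD, -⟩, -⟩ := hc
    obtain ⟨rfl, -⟩ := hφ
    obtain ⟨D', hD', -⟩ := R.mimic _ _ _ hD
    rw [R.corr_init] at hD'
    exact ⟨D', hD'⟩

end Resolution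

section Inclusions

variable {S A : Type} {L : NPLTS S A} {s₁ s₂ : S}

theorem NPLTS.mem_enabled_iff_exists_prob_ftcc_ne_zero {s : S} {a : A} :
    a ∈ L.enabled s ↔ ∃ R : Resolution L s, R.prob (R.ftcc [(a, ∅)]) ≠ 0 := by
  simp only [Resolution.prob_ftcc_ne_zero_iff]
  constructor
  · rintro ⟨D, hD⟩
    exact ⟨.singleStep hD, Resolution.singleStep_ftcc_nonempty hD⟩
  · rintro ⟨R, hR⟩
    exact R.mem_enabled_of_ftcc_cons_nonempty hR

theorem NPLTS.enabled_subset_of_forall_exists_prob_ftcc_eq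
    (h : ∀ R₁ : Resolution L s₁, ∃ R₂ : Resolution L s₂, ∀ φ : List (A × Set A),
      R₁.prob (R₁.ftcc φ) = R₂.prob (R₂.ftcc φ)) :
    L.enabled s₁ ⊆ L.enabled s₂ := by
  intro a ha
  obtain ⟨R₁, hR₁⟩ := mem_enabled_iff_exists_prob_ftcc_ne_zero.1 ha
  obtain ⟨R₂, hR⟩ := h R₁
  exact mem_enabled_iff_exists_prob_ftcc_ne_zero.2 ⟨R₂, hR [(a, ∅)] ▸ hR₁⟩

theorem PFTrDis.enabled_eq (h : PFTrDis L s₁ s₂) : L.enabled s₁ = L.enabled s₂ :=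
  (NPLTS.enabled_subset_of_forall_exists_prob_ftcc_eq h.1).antisymm
    (NPLTS.enabled_subset_of_forall_exists_prob_ftcc_eq h.2)

theorem Resolution.prob_fcc_eq_of_forall_prob_ftcc_eq {R₁ : Resolution L s₁}
    {R₂ : Resolution L s₂} (h_enabled : L.enabled s₁ = L.enabled s₂)
    (h : ∀ φ : List (A × Set A), R₁.prob (R₁.ftcc φ) = R₂.prob (R₂.ftcc φ))
    (α : List A) (F : Set A) : R₁.prob (R₁.fcc α F) = R₂.prob (R₂.fcc α F) := by
  obtain rfl | ⟨β, a, rfl⟩ := α.eq_nil_or_concat'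
  · rw [prob_fcc_nil, prob_fcc_nil, h_enabled]
  · rw [← ftcc_map_append_singleton, ← ftcc_map_append_singleton, h]

theorem PFTrDis.pfDis (h : PFTrDis L s₁ s₂) : PFDis L s₁ s₂ :=
  ⟨fun R₁ => (h.1 R₁).imp fun _ hR =>
      Resolution.prob_fcc_eq_of_forall_prob_ftcc_eq h.enabled_eq hR,
    fun R₂ => (h.2 R₂).imp fun _ hR =>
      Resolution.prob_fcc_eq_of_forall_prob_ftcc_eq h.enabled_eq.symm hR⟩

theorem Resolution.prob_cc_eq_and_prob_ccc_eq_of_forall_prob_fcc_eq {R₁ : Resolution L s₁}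
    {R₂ : Resolution L s₂}
    (h : ∀ (α : List A) (F : Set A), R₁.prob (R₁.fcc α F) = R₂.prob (R₂.fcc α F))
    (α : List A) :
    R₁.prob (R₁.cc α) = R₂.prob (R₂.cc α) ∧ R₁.prob (R₁.ccc α) = R₂.prob (R₂.ccc α) :=
  ⟨by simpa only [fcc_empty] using h α ∅, by simpa only [fcc_univ] using h α Set.univ⟩

theorem PFDis.pctrDis (h : PFDis L s₁ s₂) : PCTrDis L s₁ s₂ :=
  ⟨fun R₁ => (h.1 R₁).imp fun R₂ hR =>
      ⟨R₂, Resolution.prob_cc_eq_and_prob_ccc_eq_of_forall_prob_fcc_eq hR⟩,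
    fun R₂ => (h.2 R₂).imp fun R₁ hR =>
      ⟨R₁, Resolution.prob_cc_eq_and_prob_ccc_eq_of_forall_prob_fcc_eq hR⟩⟩

theorem PCTrDis.ptrDis (h : PCTrDis L s₁ s₂) : PTrDis L s₁ s₂ :=
  ⟨fun R₁ => (h.1 R₁).imp fun _ ⟨_, hR⟩ α => (hR α).1,
    fun R₂ => (h.2 R₂).imp fun _ ⟨_, hR⟩ α => (hR α).1⟩

end Inclusions

theorem dis_chain_general {S A : Type} (L : NPLTS S A) (s₁ s₂ : S) :
    (PFTrDis L s₁ s₂ → PFDis L s₁ s₂) ∧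
    (PFDis L s₁ s₂ → PCTrDis L s₁ s₂) ∧
    (PCTrDis L s₁ s₂ → PTrDis L s₁ s₂) :=
  ⟨PFTrDis.pfDis, PFDis.pctrDis, PCTrDis.ptrDis⟩

/-- `≈_{PFTr,dis} ⊆ ≈_{PF,dis} ⊆ ≈_{PCTr,dis} ⊆ ≈_{PTr,dis}`. -/
theorem dis_chain
    {S A : Type} [Countable S] [Countable A] (L : NPLTS S A) (s₁ s₂ : S) :
    (PFTrDis L s₁ s₂ → PFDis L s₁ s₂) ∧
    (PFDis L s₁ s₂ → PCTrDis L s₁ s₂) ∧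
    (PCTrDis L s₁ s₂ → PTrDis L s₁ s₂) :=
  dis_chain_general L s₁ s₂
end
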